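/- arXiv:2206.09832 — 2 statements merged into one kernel-verified Lean document; each statement's English description precedes it below -/
import Mathlib

section
/- Let N ≥ 3, m > 1, γ ∈ [0,2) and k > 0. Then there exists a constant C > 0 depending only on N, m, γ, k such that for every A > 0, setting S := C/A^{m−1} and defining ū(x,t) := A (1 − t/S)^{−1/(m−1)} (1+|x|²)^{(2−γ)/(2(m−1))} on ℝᴺ × [0,S), the following supersolution inequality holds pointwise for all x ∈ ℝᴺ and t ∈ (0,S): k(1+|x|)^{−γ} ∂ū/∂t (x,t) ≥ Δ_x(ūᵐ)(x,t). -/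
open MeasureTheory Metric Filter Set ENNReal

noncomputable section

abbrev Euc (N : ℕ) := EuclideanSpace ℝ (Fin N)

/-- The weight condition: `k (1+|x|)^(-γ) ≤ ρ(x) ≤ K |x|^(-γ)` for a.e. `x`. -/
def WeightCond (N : ℕ) (γ k K : ℝ) (ρ : Euc N → ℝ) : Prop :=
  Measurable ρ ∧
    ∀ᵐ x : Euc N ∂volume, k * (1 + ‖x‖) ^ (-γ) ≤ ρ x ∧ ρ x ≤ K * ‖x‖ ^ (-γ)

/-- Local integrability with respect to the weight `ρ`. -/
def LocInt1 {N : ℕ} (ρ f : Euc N → ℝ) : Prop :=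
  ∀ R : ℝ, 0 < R → IntegrableOn (fun x => |f x| * ρ x) (ball (0 : Euc N) R)

/-- The weighted norm `‖f‖_{1,r}`. -/
def wnorm1 {N : ℕ} (ρ : Euc N → ℝ) (m γ : ℝ) (r : ℝ) (f : Euc N → ℝ) : ℝ :=
  sSup ((fun R : ℝ =>
    R ^ (-((2 - γ) / (m - 1)) - (N : ℝ) + γ) * ∫ x in ball (0 : Euc N) R, |f x| * ρ x) '' Ici r)

/-- Membership in the space `X`. -/
def memX {N : ℕ} (ρ : Euc N → ℝ) (m γ : ℝ) (f : Euc N → ℝ) : Prop :=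
  LocInt1 ρ f ∧
    BddAbove ((fun R : ℝ =>
      R ^ (-((2 - γ) / (m - 1)) - (N : ℝ) + γ) * ∫ x in ball (0 : Euc N) R, |f x| * ρ x) '' Ici 1)

/-- `ℓ(f) = lim_{r→∞} ‖f‖_{1,r}`; since `r ↦ ‖f‖_{1,r}` is nonincreasing and nonnegative,
the limit equals the infimum. -/
def ell {N : ℕ} (ρ : Euc N → ℝ) (m γ : ℝ) (f : Euc N → ℝ) : ℝ :=
  sInf ((fun r : ℝ => wnorm1 ρ m γ r f) '' Ici 1)

/-- The weighted norm `‖f‖_{∞,r}`. -/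
def wnormInf {N : ℕ} (m γ : ℝ) (r : ℝ) (f : Euc N → ℝ) : ℝ :=
  sSup ((fun R : ℝ =>
    R ^ (-((2 - γ) / (m - 1))) *
      (eLpNorm f ⊤ (volume.restrict (ball (0 : Euc N) R))).toReal) '' Ici r)

/-- Membership in the space `X_∞`. -/
def memXinf {N : ℕ} (m γ : ℝ) (f : Euc N → ℝ) : Prop :=
  AEStronglyMeasurable f volume ∧
  (∀ R : ℝ, 0 < R → eLpNorm f ⊤ (volume.restrict (ball (0 : Euc N) R)) < ⊤) ∧
  BddAbove ((fun R : ℝ =>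
    R ^ (-((2 - γ) / (m - 1))) *
      (eLpNorm f ⊤ (volume.restrict (ball (0 : Euc N) R))).toReal) '' Ici 1)

/-- Signed power `u^m := |u|^(m-1) u`. -/
def spow (m s : ℝ) : ℝ := |s| ^ (m - 1) * s

/-- The Laplacian of `φ : ℝᴺ → ℝ`, as a sum of second directional derivatives along the
standard orthonormal basis. -/
def lap {N : ℕ} (φ : Euc N → ℝ) (x : Euc N) : ℝ :=
  ∑ i : Fin N, fderiv ℝ (fun y => fderiv ℝ φ y (EuclideanSpace.single i (1 : ℝ))) x
    (EuclideanSpace.single i (1 : ℝ))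

/-- The open time interval `(0,T)`, for `T ∈ (0,∞]`. -/
def TimeSet (T : ℝ≥0∞) : Set ℝ := {t : ℝ | 0 < t ∧ ENNReal.ofReal t < T}

/-- The time interval `[0,T)`, for `T ∈ (0,∞]`. -/
def TimeSet0 (T : ℝ≥0∞) : Set ℝ := {t : ℝ | 0 ≤ t ∧ ENNReal.ofReal t < T}

/-- Very weak solution of `ρ u_t = Δ(u^m)` on `ℝᴺ × (0,T)` with initial datum `u₀`. -/
def IsVeryWeakSol {N : ℕ} (ρ : Euc N → ℝ) (m : ℝ) (T : ℝ≥0∞)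
    (u : Euc N → ℝ → ℝ) (u₀ : Euc N → ℝ) : Prop :=
  (∀ t ∈ TimeSet0 T, LocInt1 ρ (fun x => u x t)) ∧
  (∀ s ∈ TimeSet0 T, ∀ R : ℝ, 0 < R →
    Tendsto (fun t => ∫ x in ball (0 : Euc N) R, |u x t - u x s| * ρ x)
      (nhdsWithin s (TimeSet0 T)) (nhds 0)) ∧
  (∀ᵐ x : Euc N ∂volume, u x 0 = u₀ x) ∧
  (∀ R : ℝ, 0 < R → ∀ a b : ℝ, 0 < a → a ≤ b → ENNReal.ofReal b < T →
    IntegrableOn (fun p : Euc N × ℝ => spow m (u p.1 p.2)) (ball (0 : Euc N) R ×ˢ Icc a b)) ∧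
  (∀ φ : Euc N × ℝ → ℝ, ContDiff ℝ (⊤ : ℕ∞) φ → HasCompactSupport φ →
    tsupport φ ⊆ {p : Euc N × ℝ | p.2 ∈ TimeSet T} →
    -(∫ p : Euc N × ℝ in (univ : Set (Euc N)) ×ˢ TimeSet T,
        u p.1 p.2 * deriv (fun s => φ (p.1, s)) p.2 * ρ p.1) =
      ∫ p : Euc N × ℝ in (univ : Set (Euc N)) ×ˢ TimeSet T,
        spow m (u p.1 p.2) * lap (fun y => φ (y, p.2)) p.1)

/-- The existence time `T = C / L^(m-1)` if `L > 0`, and `T = ∞` if `L = 0` (here `L = ℓ(u₀)` or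
`L = ‖u₀‖_{1,r}`). -/
def Tof (C m L : ℝ) : ℝ≥0∞ := if 0 < L then ENNReal.ofReal (C / L ^ (m - 1)) else ⊤

end

/-!
The barrier separates as `ū(x,t) = θ(t) w(x)`. Both factors are chosen so that `ū ^ m` closes up:
the blow-up exponent `1 / (m - 1)` makes `θ' = θ ^ m / ((m - 1) S A ^ (m - 1))`, and the growth
exponent `p = (2 - γ) / (2 (m - 1))` satisfies `p m - 1 = p - γ / 2`, so that
`Δ (w ^ m) ≤ K (1 + |x|) ^ (-γ) w` for some constant `K`. Hence
`Δ (ū ^ m) ≤ θ ^ m K (1 + |x|) ^ (-γ) w = (m - 1) S A ^ (m - 1) K (1 + |x|) ^ (-γ) ∂ₜū`,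
and the choice `S = C / A ^ (m - 1)` with `C = k / ((m - 1) K)` turns the constant into `k`.
-/

open scoped InnerProductSpace Laplacian Topology

section Laplacian

variable {E : Type*} [NormedAddCommGroup E] [InnerProductSpace ℝ E]

theorem hasFDerivAt_comp_norm_sq {g : ℝ → ℝ} {g' : ℝ} {x : E}
    (hg : HasDerivAt g g' (‖x‖ ^ 2)) :
    HasFDerivAt (fun y : E => g (‖y‖ ^ 2)) ((2 * g') • innerSL ℝ x) x := by
  have h := hg.comp_hasFDerivAt x (hasStrictFDerivAt_norm_sq x).hasFDerivAt
  rwa [← Nat.cast_smul_eq_nsmul ℝ, smul_smul, mul_comm] at h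

theorem fderiv_fderiv_comp_norm_sq_apply {g : ℝ → ℝ} {x : E} (hg : ContDiffAt ℝ 2 g (‖x‖ ^ 2))
    (v : E) :
    fderiv ℝ (fun y => fderiv ℝ (fun z : E => g (‖z‖ ^ 2)) y v) x v =
      2 * deriv g (‖x‖ ^ 2) * ‖v‖ ^ 2 + 4 * deriv (deriv g) (‖x‖ ^ 2) * ⟪x, v⟫_ℝ ^ 2 := by
  have hfderiv : (fun y => fderiv ℝ (fun z : E => g (‖z‖ ^ 2)) y v) =ᶠ[𝓝 x]
      fun y => 2 * deriv g (‖y‖ ^ 2) * ⟪y, v⟫_ℝ := by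
    have hnear : ∀ᶠ y in 𝓝 x, ContDiffAt ℝ 2 g (‖y‖ ^ 2) :=
      (continuous_norm.pow 2).continuousAt.eventually (hg.eventually (by simp))
    filter_upwards [hnear] with y hy
    simp [(hasFDerivAt_comp_norm_sq (hy.differentiableAt two_ne_zero).hasDerivAt).fderiv]
  have hderiv : HasDerivAt (deriv g) (deriv (deriv g) (‖x‖ ^ 2)) (‖x‖ ^ 2) :=
    ((hg.derivWithin (m := 1) (by norm_num)).differentiableAt one_ne_zero).hasDerivAt
  have hinner : HasFDerivAt (fun y : E => ⟪y, v⟫_ℝ) (innerSL ℝ v) x := by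
    simp only [real_inner_comm v]
    exact (innerSL ℝ v).hasFDerivAt
  rw [hfderiv.fderiv_eq, (((hasFDerivAt_comp_norm_sq hderiv).const_mul 2).fun_mul hinner).fderiv]
  simp only [add_apply, smul_apply, innerSL_apply_apply,
    real_inner_self_eq_norm_sq, smul_eq_mul]
  ring

variable [FiniteDimensional ℝ E]

theorem laplacian_eq_sum_fderiv_fderiv {ι : Type*} [Fintype ι] (b : OrthonormalBasis ι ℝ E)
    {f : E → ℝ} {x : E} (hf : ContDiffAt ℝ 2 f x) :
    Δ f x = ∑ i, fderiv ℝ (fun y => fderiv ℝ f y (b i)) x (b i) := by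
  have hf' : DifferentiableAt ℝ (fderiv ℝ f) x :=
    (hf.fderiv_right (m := 1) (by norm_num)).differentiableAt one_ne_zero
  simp [InnerProductSpace.laplacian_eq_iteratedFDeriv_orthonormalBasis f b,
    iteratedFDeriv_two_apply, fderiv_clm_apply hf' (differentiableAt_const _)]

theorem lap_eq_laplacian {N : ℕ} {f : Euc N → ℝ} {x : Euc N} (hf : ContDiffAt ℝ 2 f x) :
    lap f x = Δ f x := by
  simp only [lap, laplacian_eq_sum_fderiv_fderiv (EuclideanSpace.basisFun (Fin N) ℝ) hf,
    EuclideanSpace.basisFun_apply]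

theorem laplacian_comp_norm_sq {g : ℝ → ℝ} {x : E} (hg : ContDiffAt ℝ 2 g (‖x‖ ^ 2)) :
    Δ (fun y : E => g (‖y‖ ^ 2)) x =
      2 * Module.finrank ℝ E * deriv g (‖x‖ ^ 2) + 4 * ‖x‖ ^ 2 * deriv (deriv g) (‖x‖ ^ 2) := by
  have hf : ContDiffAt ℝ 2 (fun y : E => g (‖y‖ ^ 2)) x :=
    hg.comp x (contDiff_norm_sq ℝ).contDiffAt
  let b := stdOrthonormalBasis ℝ E
  calc Δ (fun y : E => g (‖y‖ ^ 2)) x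
      = ∑ i, (2 * deriv g (‖x‖ ^ 2) + 4 * deriv (deriv g) (‖x‖ ^ 2) * ⟪x, b i⟫_ℝ ^ 2) := by
        simp only [laplacian_eq_sum_fderiv_fderiv b hf, fderiv_fderiv_comp_norm_sq_apply hg,
          b.norm_eq_one, one_pow, mul_one]
    _ = 2 * Module.finrank ℝ E * deriv g (‖x‖ ^ 2) +
          4 * ‖x‖ ^ 2 * deriv (deriv g) (‖x‖ ^ 2) := by
        rw [Finset.sum_add_distrib, ← Finset.mul_sum, ← Finset.mul_sum, b.sum_sq_inner_left]
        simp only [Finset.sum_const, Finset.card_univ, Fintype.card_fin, nsmul_eq_mul]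
        ring

end Laplacian

section JapaneseBracket

variable {E : Type*} [NormedAddCommGroup E]

theorem one_add_norm_sq_rpow_le (x : E) (r : ℝ) :
    (1 + ‖x‖ ^ 2) ^ (-r / 2) ≤ 2 ^ (|r| / 2) * (1 + ‖x‖) ^ (-r) := by
  rcases lt_or_ge 0 r with hr | hr
  · simpa only [abs_of_pos hr] using rpow_neg_one_add_norm_sq_le x hr
  · have hsq : 1 + ‖x‖ ^ 2 ≤ (1 + ‖x‖) ^ 2 := by linarith [norm_nonneg x, add_sq 1 ‖x‖]
    calc (1 + ‖x‖ ^ 2) ^ (-r / 2) ≤ ((1 + ‖x‖) ^ 2) ^ (-r / 2) :=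
          Real.rpow_le_rpow (by positivity) hsq (by linarith)
      _ = (1 + ‖x‖) ^ (-r) := by
          rw [← Real.rpow_natCast_mul (by positivity)]
          congr 1
          push_cast
          ring
      _ ≤ 2 ^ (|r| / 2) * (1 + ‖x‖) ^ (-r) :=
          le_mul_of_one_le_left (by positivity)
            (Real.one_le_rpow one_le_two (by positivity))

variable [InnerProductSpace ℝ E]

theorem contDiff_one_add_norm_sq_rpow (q : ℝ) {n : WithTop ℕ∞} :
    ContDiff ℝ n fun x : E => (1 + ‖x‖ ^ 2) ^ q :=
  (contDiff_const.add (contDiff_norm_sq ℝ)).rpow_const_of_ne fun x => by positivity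

variable [FiniteDimensional ℝ E]

theorem laplacian_one_add_norm_sq_rpow (q : ℝ) (x : E) :
    Δ (fun y => (1 + ‖y‖ ^ 2) ^ q : E → ℝ) x =
      2 * q * Module.finrank ℝ E * (1 + ‖x‖ ^ 2) ^ (q - 1) +
        4 * q * (q - 1) * ‖x‖ ^ 2 * (1 + ‖x‖ ^ 2) ^ (q - 2) := by
  have hderiv (r : ℝ) : deriv (fun s : ℝ => (1 + s) ^ r) = fun s => r * (1 + s) ^ (r - 1) := by
    funext s
    rw [deriv_comp_const_add (fun u : ℝ => u ^ r), Real.deriv_rpow_const]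
  have hsmooth : ContDiffAt ℝ 2 (fun s : ℝ => (1 + s) ^ q) (‖x‖ ^ 2) :=
    (contDiffAt_const.add contDiffAt_id).rpow_const_of_ne (by simp only [id]; positivity)
  rw [laplacian_comp_norm_sq hsmooth, hderiv, deriv_const_mul_field, hderiv]
  ring_nf

theorem abs_laplacian_one_add_norm_sq_rpow_le (q : ℝ) (x : E) :
    |Δ (fun y => (1 + ‖y‖ ^ 2) ^ q : E → ℝ) x| ≤
      (2 * |q| * Module.finrank ℝ E + 4 * |q * (q - 1)|) * (1 + ‖x‖ ^ 2) ^ (q - 1) := by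
  have hbase : 1 + ‖x‖ ^ 2 ≠ 0 := by positivity
  have hlower : ‖x‖ ^ 2 * (1 + ‖x‖ ^ 2) ^ (q - 2) ≤ (1 + ‖x‖ ^ 2) ^ (q - 1) :=
    calc ‖x‖ ^ 2 * (1 + ‖x‖ ^ 2) ^ (q - 2)
        ≤ (1 + ‖x‖ ^ 2) * (1 + ‖x‖ ^ 2) ^ (q - 2) := by gcongr; linarith
      _ = (1 + ‖x‖ ^ 2) ^ (q - 1) := by
        rw [mul_comm, ← Real.rpow_add_one hbase]
        ring_nf
  calc |Δ (fun y => (1 + ‖y‖ ^ 2) ^ q : E → ℝ) x|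
      = |2 * q * Module.finrank ℝ E * (1 + ‖x‖ ^ 2) ^ (q - 1) +
          4 * (q * (q - 1)) * (‖x‖ ^ 2 * (1 + ‖x‖ ^ 2) ^ (q - 2))| := by
        rw [laplacian_one_add_norm_sq_rpow]
        ring_nf
    _ ≤ 2 * |q| * Module.finrank ℝ E * (1 + ‖x‖ ^ 2) ^ (q - 1) +
          4 * |q * (q - 1)| * (‖x‖ ^ 2 * (1 + ‖x‖ ^ 2) ^ (q - 2)) := by
        refine (abs_add_le _ _).trans_eq ?_
        have hpow (r : ℝ) : |(1 + ‖x‖ ^ 2) ^ r| = (1 + ‖x‖ ^ 2) ^ r :=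
          abs_of_nonneg (by positivity)
        simp only [abs_mul, hpow, Nat.abs_cast, Nat.abs_ofNat, abs_pow, abs_norm]
    _ ≤ 2 * |q| * Module.finrank ℝ E * (1 + ‖x‖ ^ 2) ^ (q - 1) +
          4 * |q * (q - 1)| * (1 + ‖x‖ ^ 2) ^ (q - 1) := by gcongr
    _ = (2 * |q| * Module.finrank ℝ E + 4 * |q * (q - 1)|) * (1 + ‖x‖ ^ 2) ^ (q - 1) := by ring

end JapaneseBracket

section Barrier

/-- The time factor `θ(t) = A (1 - t / S) ^ (-1 / (m - 1))` of the barrier, blowing up at `S`. -/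
noncomputable def barrierAmplitude (m A S t : ℝ) : ℝ :=
  A * (1 - t / S) ^ (-(1 / (m - 1)))

variable {E : Type*} [NormedAddCommGroup E]

/-- The space factor `w` of the barrier, behaving like `|x| ^ ((2 - γ) / (m - 1))` at infinity. -/
noncomputable def barrierProfile (m γ : ℝ) (x : E) : ℝ :=
  (1 + ‖x‖ ^ 2) ^ ((2 - γ) / (2 * (m - 1)))

/-- The barrier `ū(x,t) = θ(t) w(x)`, on an arbitrary normed space; the paper's barrier has
`S = C / A ^ (m - 1)`. -/
noncomputable def barrier (m γ A S : ℝ) (x : E) (t : ℝ) : ℝ :=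
  barrierAmplitude m A S t * barrierProfile m γ x

variable {m A S t : ℝ}

theorem barrierAmplitude_pos (hA : 0 < A) (hS : 0 < S) (ht : t < S) :
    0 < barrierAmplitude m A S t :=
  mul_pos hA (Real.rpow_pos_of_pos (sub_pos.2 ((div_lt_one hS).2 ht)) _)

theorem hasDerivAt_barrierAmplitude (hm : m ≠ 1) (hA : 0 < A) (hS : 0 < S) (ht : t < S) :
    HasDerivAt (barrierAmplitude m A S)
      (barrierAmplitude m A S t ^ m / ((m - 1) * (S * A ^ (m - 1)))) t := by
  have hm' : m - 1 ≠ 0 := sub_ne_zero.2 hm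
  have hτ : 0 < 1 - t / S := sub_pos.2 ((div_lt_one hS).2 ht)
  have hpow : barrierAmplitude m A S t ^ m =
      A * A ^ (m - 1) * (1 - t / S) ^ (-(1 / (m - 1)) - 1) := by
    have hexp : -(1 / (m - 1)) * m = -(1 / (m - 1)) - 1 := by field_simp; ring
    rw [barrierAmplitude, Real.mul_rpow hA.le (by positivity), ← Real.rpow_mul hτ.le, hexp,
      mul_comm A, Real.rpow_sub_one hA.ne', div_mul_cancel₀ _ hA.ne']
  have hlin : HasDerivAt (fun s : ℝ => 1 - s / S) (-(1 / S)) t :=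
    ((hasDerivAt_id t).div_const S).const_sub 1
  refine ((hlin.rpow_const (p := -(1 / (m - 1))) (.inl hτ.ne')).const_mul A).congr_deriv ?_
  rw [hpow]
  field_simp

theorem barrierProfile_nonneg (γ : ℝ) (x : E) : 0 ≤ barrierProfile m γ x :=
  Real.rpow_nonneg (by positivity) _

theorem barrierProfile_rpow (γ : ℝ) (x : E) :
    barrierProfile m γ x ^ m = (1 + ‖x‖ ^ 2) ^ ((2 - γ) / (2 * (m - 1)) * m) :=
  (Real.rpow_mul (by positivity) _ _).symm

theorem barrier_rpow (γ : ℝ) (hθ : 0 ≤ barrierAmplitude m A S t) :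
    (fun x : E => barrier m γ A S x t ^ m) =
      barrierAmplitude m A S t ^ m • fun x => barrierProfile m γ x ^ m :=
  funext fun x => Real.mul_rpow hθ (barrierProfile_nonneg γ x)

variable [InnerProductSpace ℝ E]

theorem contDiff_barrierProfile_rpow (γ : ℝ) {n : WithTop ℕ∞} :
    ContDiff ℝ n fun x : E => barrierProfile m γ x ^ m := by
  simpa only [barrierProfile_rpow] using contDiff_one_add_norm_sq_rpow _

theorem contDiff_barrier_rpow (γ : ℝ) (hθ : 0 ≤ barrierAmplitude m A S t) {n : WithTop ℕ∞} :
    ContDiff ℝ n fun x : E => barrier m γ A S x t ^ m := by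
  rw [barrier_rpow γ hθ]
  exact contDiff_const.smul (contDiff_barrierProfile_rpow γ)

variable (E) [FiniteDimensional ℝ E]

theorem exists_laplacian_barrierProfile_rpow_le (γ : ℝ) (hm : m ≠ 1) :
    ∃ K : ℝ, 0 < K ∧ ∀ x : E, Δ (fun y => barrierProfile m γ y ^ m : E → ℝ) x ≤
      K * ((1 + ‖x‖) ^ (-γ) * barrierProfile m γ x) := by
  have hm' : m - 1 ≠ 0 := sub_ne_zero.2 hm
  let p := (2 - γ) / (2 * (m - 1))
  have hexp : p * m - 1 = -γ / 2 + p := by simp only [p]; field_simp; ring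
  let M := 2 * |p * m| * Module.finrank ℝ E + 4 * |p * m * (p * m - 1)|
  refine ⟨(M + 1) * 2 ^ (|γ| / 2), by positivity, fun x => ?_⟩
  calc Δ (fun y => barrierProfile m γ y ^ m : E → ℝ) x
      = Δ (fun y => (1 + ‖y‖ ^ 2) ^ (p * m) : E → ℝ) x := by simp only [barrierProfile_rpow, p]
    _ ≤ (M + 1) * (1 + ‖x‖ ^ 2) ^ (p * m - 1) := by
        refine (le_abs_self _).trans ((abs_laplacian_one_add_norm_sq_rpow_le _ x).trans ?_)
        exact mul_le_mul_of_nonneg_right (lt_add_one M).le (by positivity)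
    _ = (M + 1) * ((1 + ‖x‖ ^ 2) ^ (-γ / 2) * barrierProfile m γ x) := by
        rw [hexp, Real.rpow_add (by positivity), barrierProfile]
    _ ≤ (M + 1) * (2 ^ (|γ| / 2) * (1 + ‖x‖) ^ (-γ) * barrierProfile m γ x) := by
        have hw : 0 ≤ barrierProfile m γ x := barrierProfile_nonneg γ x
        gcongr
        exact one_add_norm_sq_rpow_le x γ
    _ = (M + 1) * 2 ^ (|γ| / 2) * ((1 + ‖x‖) ^ (-γ) * barrierProfile m γ x) := by ring

end Barrier

theorem supersolution_barrier_general (E : Type*) [NormedAddCommGroup E] [InnerProductSpace ℝ E]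
    [FiniteDimensional ℝ E] {m k : ℝ} (γ : ℝ) (hm : 1 < m) (hk : 0 < k) :
    ∃ C : ℝ, 0 < C ∧ ∀ A : ℝ, 0 < A →
      let S : ℝ := C / A ^ (m - 1)
      ∀ x : E, ∀ t : ℝ, t < S →
        Δ (fun y => barrier m γ A S y t ^ m : E → ℝ) x ≤
          k * (1 + ‖x‖) ^ (-γ) * deriv (barrier m γ A S x) t := by
  have hm' : 0 < m - 1 := sub_pos.2 hm
  obtain ⟨K, hK, hprofile⟩ := exists_laplacian_barrierProfile_rpow_le E γ hm.ne'
  refine ⟨k / ((m - 1) * K), by positivity, ?_⟩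
  intro A hA S x t ht
  have hS_pos : 0 < S := by positivity
  have hθ : 0 < barrierAmplitude m A S t := barrierAmplitude_pos hA hS_pos ht
  have hderiv : HasDerivAt (barrier m γ A S x)
      (barrierAmplitude m A S t ^ m * K / k * barrierProfile m γ x) t := by
    refine ((hasDerivAt_barrierAmplitude hm.ne' hA hS_pos ht).mul_const _).congr_deriv ?_
    simp only [S]
    field_simp
  calc Δ (fun y => barrier m γ A S y t ^ m : E → ℝ) x
      = barrierAmplitude m A S t ^ m * Δ (fun y => barrierProfile m γ y ^ m : E → ℝ) x := by
        rw [barrier_rpow γ hθ.le, InnerProductSpace.laplacian_smul _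
          (contDiff_barrierProfile_rpow γ).contDiffAt, smul_eq_mul]
    _ ≤ barrierAmplitude m A S t ^ m * (K * ((1 + ‖x‖) ^ (-γ) * barrierProfile m γ x)) := by
        gcongr
        exact hprofile x
    _ = k * (1 + ‖x‖) ^ (-γ) * deriv (barrier m γ A S x) t := by
        rw [hderiv.deriv]
        field_simp

open MeasureTheory Metric Filter Set ENNReal in
/-- **Supersolution barrier** (from the proof of Lemma 4.3 of Muratori–Petitt): there is a
constant `C > 0` depending only on `N, m, γ, k` such that, with `S = C/A^(m-1)`, the barrier
`ū(x,t) = A (1-t/S)^{-1/(m-1)} (1+|x|²)^{(2-γ)/(2(m-1))}` satisfies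
`k (1+|x|)^{-γ} ∂ū/∂t ≥ Δ(ū^m)` pointwise on `ℝᴺ × (0,S)`. -/
theorem supersolution_barrier
    (N : ℕ) (hN : 3 ≤ N) (m γ k : ℝ)
    (hm : 1 < m) (hγ0 : 0 ≤ γ) (hγ2 : γ < 2) (hk : 0 < k) :
    ∃ C : ℝ, 0 < C ∧
      ∀ A : ℝ, 0 < A →
        let S : ℝ := C / A ^ (m - 1)
        let ub : Euc N → ℝ → ℝ := fun x t =>
          A * (1 - t / S) ^ (-(1 / (m - 1))) * (1 + ‖x‖ ^ 2) ^ ((2 - γ) / (2 * (m - 1)))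
        ∀ x : Euc N, ∀ t : ℝ, 0 < t → t < S →
          lap (fun y => ub y t ^ m) x ≤
            k * (1 + ‖x‖) ^ (-γ) * deriv (fun s => ub x s) t := by
  obtain ⟨C, hC, h⟩ := supersolution_barrier_general (Euc N) γ hm hk
  exact ⟨C, hC, fun A hA x t _ ht => (lap_eq_laplacian (contDiff_barrier_rpow γ
    (barrierAmplitude_pos hA (by positivity) ht).le).contDiffAt).trans_le (h A hA x t ht)⟩
end

section
/- Let N ≥ 3, m > 1, γ ∈ [0,2), 0 < k ≤ K, and let ρ : (0,∞) → ℝ be measurable with k(1+y)^{−γ} ≤ ρ(y) ≤ K y^{−γ} for a.e. y > 0. Define F : [0,∞) → ℝ by F(y) = y² for y ∈ [0,1] and F(y) = y^{2−γ} for y > 1. Then there exists a constant c > 0 depending only on N, m, γ, k (and in particular independent of β and ρ) such that for every β > 0, every continuous nonnegative V : [0,∞) → ℝ satisfying V(y) = β^m + ∫₀^y z^{−(N−1)} ( ∫₀^z ζ^{N−1} ρ(ζ) V(ζ)^{1/m} dζ ) dz for all y ≥ 0 obeys the pointwise lower bound V(y) ≥ c · F(y)^{m/(m−1)} for all y ≥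 0; in particular liminf_{y→+∞} V(y)/y^{(2−γ)m/(m−1)} ≥ c. -/
open MeasureTheory Metric Filter Set ENNReal

/-!
The radial flux `z ^ (1 - d) * ∫ ζ in 0..z, ζ ^ (d - 1) * (ρ ζ * V ζ ^ (1 / m))` is nonnegative, so
`V` is nondecreasing. Hence on `[y / 2, y]` the source `ρ * V ^ (1 / m)` is at least a multiple of
`(1 + y) ^ (-γ) * V (y / 2) ^ (1 / m)`, and integrating twice gives
`V y ≥ C * f y * V (y / 2) ^ (1 / m)` with `f y = y ^ 2 * (1 + y) ^ (-γ)`. In terms of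
`q = V / f ^ (m / (m - 1))` this reads `q y ≥ A * q (y / 2) ^ (1 / m)`, in which neither `V 0` nor
`ρ` appears any more. As `V ≥ V 0 > 0`, the infimum of `q` over `(0, Y]` is positive, and the
inequality forces it to be at least `A ^ (m / (m - 1))`.
-/

lemma two_rpow_neg_abs_mul_rpow_le_rpow {a b : ℝ} (ha : 0 < a) (hb : 0 < b) (hab : a ≤ 2 * b)
    (hba : b ≤ 2 * a) (s : ℝ) : 2 ^ (-|s|) * a ^ s ≤ b ^ s := by
  rcases le_total 0 s with hs | hs
  · rw [abs_of_nonneg hs, Real.rpow_neg zero_le_two, ← Real.inv_rpow zero_le_two,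
      ← Real.mul_rpow (by norm_num) ha.le]
    exact Real.rpow_le_rpow (by positivity) (by linarith) hs
  · rw [abs_of_nonpos hs, neg_neg, ← Real.mul_rpow zero_le_two ha.le]
    exact Real.rpow_le_rpow_of_nonpos hb hba hs

section SelfImproving

lemma rpow_inv_le_of_mul_rpow_le {A x s : ℝ} (hA : 0 ≤ A) (hx : 0 < x) (hs : s < 1)
    (h : A * x ^ s ≤ x) : A ^ (1 - s)⁻¹ ≤ x := by
  have hAx : A ≤ x ^ (1 - s) := by
    rwa [Real.rpow_sub hx, Real.rpow_one, le_div_iff₀ (by positivity)]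
  exact (Real.rpow_inv_le_iff_of_pos hA hx.le (sub_pos.2 hs)).2 hAx

/-- The infimum of `q` over `S` inherits the inequality satisfied by `q`. -/
lemma rpow_inv_le_of_mul_rpow_comp_le {X : Type*} {S : Set X} {T : X → X} {q : X → ℝ} {A b s : ℝ}
    (hT : MapsTo T S S) (hA : 0 ≤ A) (hb : 0 < b) (hs₀ : 0 ≤ s) (hs₁ : s < 1)
    (hbq : ∀ x ∈ S, b ≤ q x) (hq : ∀ x ∈ S, A * q (T x) ^ s ≤ q x) {x : X} (hx : x ∈ S) :
    A ^ (1 - s)⁻¹ ≤ q x := by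
  have hne : (q '' S).Nonempty := ⟨q x, mem_image_of_mem q hx⟩
  have hbdd : BddBelow (q '' S) := ⟨b, forall_mem_image.2 hbq⟩
  have hpos : 0 < sInf (q '' S) := hb.trans_le (le_csInf hne (forall_mem_image.2 hbq))
  have hinf : ∀ y ∈ S, sInf (q '' S) ≤ q y := fun y hy => csInf_le hbdd (mem_image_of_mem q hy)
  refine (rpow_inv_le_of_mul_rpow_le hA hpos hs₁ ?_).trans (hinf x hx)
  refine le_csInf hne (forall_mem_image.2 fun y hy => le_trans ?_ (hq y hy))
  gcongr
  exact hinf _ (hT hy)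

lemma mul_div_rpow_rpow_le_div_rpow {m B C f g v w : ℝ} (hm : 1 < m) (hB : 0 ≤ B) (hf : 0 < f)
    (hg : 0 < g) (hv : 0 ≤ v) (hw : 0 ≤ w) (hBfg : B * f ≤ g) (h : C * f * w ^ (1 / m) ≤ v) :
    C * B ^ (m / (m - 1) - 1) * (w / g ^ (m / (m - 1))) ^ (1 / m) ≤ v / f ^ (m / (m - 1)) := by
  have hm₁ : 0 < m - 1 := by linarith
  set p := m / (m - 1) with hp
  have hp_sub : p * (1 / m) = p - 1 := by rw [hp]; field_simp; ring
  have hp₁ : 0 ≤ p - 1 := by rw [← hp_sub]; positivity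
  rw [Real.div_rpow hw (by positivity), ← Real.rpow_mul hg.le, hp_sub, mul_div_assoc',
    div_le_div_iff₀ (by positivity) (by positivity)]
  calc C * B ^ (p - 1) * w ^ (1 / m) * f ^ p
      = C * f * w ^ (1 / m) * (B * f) ^ (p - 1) := by
        rw [Real.mul_rpow hB hf.le, Real.rpow_sub_one hf.ne']
        field_simp
    _ ≤ v * g ^ (p - 1) := by gcongr

lemma rpow_mul_rpow_le_of_mul_rpow_half_le {V f : ℝ → ℝ} {m b B C : ℝ} (hm : 1 < m) (hb : 0 < b)
    (hB : 0 ≤ B) (hC : 0 ≤ C) (hf : ContinuousOn f (Ici 0)) (hf₀ : ∀ y, 0 < y → 0 < f y)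
    (hf_half : ∀ y, 0 < y → B * f y ≤ f (y / 2)) (hbV : ∀ y, 0 < y → b ≤ V y)
    (hV : ∀ y, 0 < y → C * f y * V (y / 2) ^ (1 / m) ≤ V y) {y : ℝ} (hy : 0 < y) :
    (C * B ^ (m / (m - 1) - 1)) ^ (m / (m - 1)) * f y ^ (m / (m - 1)) ≤ V y := by
  have hm₁ : 0 < m - 1 := by linarith
  have hp_inv : (1 - 1 / m)⁻¹ = m / (m - 1) := by field_simp
  obtain ⟨M, hM⟩ := isCompact_Icc.exists_bound_of_continuousOn
    (hf.mono (Icc_subset_Ici_self : Icc 0 y ⊆ Ici 0))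
  have hfM : ∀ x ∈ Ioc 0 y, f x ≤ M := fun x hx =>
    (le_abs_self _).trans (hM x (Ioc_subset_Icc_self hx))
  have hM₀ : 0 < M := (hf₀ y hy).trans_le (hfM y ⟨hy, le_rfl⟩)
  rw [← le_div_iff₀ (Real.rpow_pos_of_pos (hf₀ y hy) _), ← hp_inv]
  refine rpow_inv_le_of_mul_rpow_comp_le (S := Ioc 0 y) (T := (· / 2)) (s := 1 / m)
    (q := fun x => V x / f x ^ (1 - 1 / m)⁻¹) (b := b / M ^ (1 - 1 / m)⁻¹)
    (fun x hx => ⟨half_pos hx.1, (half_le_self hx.1.le).trans hx.2⟩)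
    (by positivity) (by positivity) (by positivity) ((div_lt_one (by linarith)).2 hm)
    (fun x hx => ?_) (fun x hx => ?_) ⟨hy, le_rfl⟩ <;> rw [hp_inv]
  · have hfx := hf₀ x hx.1
    exact div_le_div₀ (hb.le.trans (hbV x hx.1)) (hbV x hx.1) (by positivity)
      (Real.rpow_le_rpow hfx.le (hfM x hx) (by positivity))
  · exact mul_div_rpow_rpow_le_div_rpow hm hB (hf₀ x hx.1) (hf₀ _ (half_pos hx.1))
      (hb.le.trans (hbV x hx.1)) (hb.le.trans (hbV _ (half_pos hx.1))) (hf_half x hx.1) (hV x hx.1)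

end SelfImproving

section RadialFlux

/-- The derivative at `z` of the radial solution `v` of `Δ v = s` that is regular at the origin, for
a radial source `s` in (possibly fractional) dimension `d`. -/
noncomputable def radialFlux (d : ℝ) (s : ℝ → ℝ) (z : ℝ) : ℝ :=
  z ^ (-(d - 1)) * ∫ ζ in (0 : ℝ)..z, ζ ^ (d - 1) * s ζ

variable {d γ A : ℝ} {s : ℝ → ℝ}

lemma radialFlux_nonneg (hs : ∀ᵐ ζ ∂volume.restrict (Ioi (0 : ℝ)), 0 ≤ s ζ) {z : ℝ} (hz : 0 ≤ z) :
    0 ≤ radialFlux d s z := by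
  refine mul_nonneg (Real.rpow_nonneg hz _) ?_
  rw [intervalIntegral.integral_of_le hz]
  refine integral_nonneg_of_ae ?_
  filter_upwards [ae_restrict_of_ae_restrict_of_subset Ioc_subset_Ioi_self hs,
    ae_restrict_mem measurableSet_Ioc] with ζ hsζ hζ
  exact mul_nonneg (Real.rpow_nonneg hζ.1.le _) hsζ

lemma mul_sub_le_radialFlux {a z D : ℝ} (ha : 0 < a) (haz : a ≤ z) (hza : z ≤ 2 * a)
    (hint : IntervalIntegrable (fun ζ => ζ ^ (d - 1) * s ζ) volume 0 z)
    (hs : ∀ᵐ ζ ∂volume.restrict (Ioi (0 : ℝ)), 0 ≤ s ζ) (hD : 0 ≤ D)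
    (hDs : ∀ᵐ ζ ∂volume.restrict (Icc a (2 * a)), D ≤ s ζ) :
    2 ^ (-|d - 1|) * D * (z - a) ≤ radialFlux d s z := by
  have hz : 0 < z := ha.trans_le haz
  have hint_a : IntervalIntegrable (fun ζ => ζ ^ (d - 1) * s ζ) volume a z :=
    hint.mono_set (by rw [uIcc_of_le haz, uIcc_of_le hz.le]; exact Icc_subset_Icc_left ha.le)
  have hinner : z ^ (d - 1) * (2 ^ (-|d - 1|) * D * (z - a)) ≤
      ∫ ζ in (0 : ℝ)..z, ζ ^ (d - 1) * s ζ := calc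
    _ = ∫ _ in a..z, 2 ^ (-|d - 1|) * z ^ (d - 1) * D := by
        rw [intervalIntegral.integral_const, smul_eq_mul]; ring
    _ ≤ ∫ ζ in a..z, ζ ^ (d - 1) * s ζ := by
        refine intervalIntegral.integral_mono_ae_restrict haz (by simp) hint_a ?_
        filter_upwards [ae_restrict_of_ae_restrict_of_subset (Icc_subset_Icc_right hza) hDs,
          ae_restrict_mem measurableSet_Icc] with ζ hDζ hζ
        have hζ₀ : 0 < ζ := ha.trans_le hζ.1
        refine mul_le_mul ?_ hDζ hD (Real.rpow_nonneg hζ₀.le _)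
        exact two_rpow_neg_abs_mul_rpow_le_rpow hz hζ₀ (by linarith [hζ.1]) (by linarith [hζ.2]) _
    _ ≤ ∫ ζ in (0 : ℝ)..z, ζ ^ (d - 1) * s ζ := by
        refine intervalIntegral.integral_mono_interval ha.le haz le_rfl ?_ hint
        filter_upwards [ae_restrict_of_ae_restrict_of_subset Ioc_subset_Ioi_self hs,
          ae_restrict_mem measurableSet_Ioc] with ζ hsζ hζ
        exact mul_nonneg (Real.rpow_nonneg hζ.1.le _) hsζ
  rwa [radialFlux, Real.rpow_neg hz.le, ← div_eq_inv_mul, le_div_iff₀' (by positivity)]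

lemma mul_sq_le_integral_radialFlux {a D : ℝ} (ha : 0 < a)
    (hint : ∀ z, 0 ≤ z → IntervalIntegrable (fun ζ => ζ ^ (d - 1) * s ζ) volume 0 z)
    (hflux : IntervalIntegrable (radialFlux d s) volume 0 (2 * a))
    (hs : ∀ᵐ ζ ∂volume.restrict (Ioi (0 : ℝ)), 0 ≤ s ζ) (hD : 0 ≤ D)
    (hDs : ∀ᵐ ζ ∂volume.restrict (Icc a (2 * a)), D ≤ s ζ) :
    2 ^ (-|d - 1|) * D * (a ^ 2 / 2) ≤ ∫ z in (0 : ℝ)..(2 * a), radialFlux d s z := by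
  have ha₂ : a ≤ 2 * a := by linarith
  have hflux_a : IntervalIntegrable (radialFlux d s) volume a (2 * a) :=
    hflux.mono_set (by
      rw [uIcc_of_le ha₂, uIcc_of_le (ha.le.trans ha₂)]; exact Icc_subset_Icc_left ha.le)
  calc 2 ^ (-|d - 1|) * D * (a ^ 2 / 2)
      = ∫ z in a..(2 * a), 2 ^ (-|d - 1|) * D * (z - a) := by
        rw [intervalIntegral.integral_const_mul,
          intervalIntegral.integral_comp_sub_right (fun x => x) a, integral_id]
        ring
    _ ≤ ∫ z in a..(2 * a), radialFlux d s z :=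
        intervalIntegral.integral_mono_on ha₂ (Continuous.intervalIntegrable (by fun_prop) _ _)
          hflux_a fun z hz => mul_sub_le_radialFlux ha hz.1 hz.2
            (hint z (ha.le.trans hz.1)) hs hD hDs
    _ ≤ ∫ z in (0 : ℝ)..(2 * a), radialFlux d s z := by
        refine intervalIntegral.integral_mono_interval ha.le ha₂ le_rfl ?_ hflux
        filter_upwards [ae_restrict_mem measurableSet_Ioc] with z hz
        exact radialFlux_nonneg hs hz.1.le

lemma norm_rpow_mul_le {ζ : ℝ} (hζ : 0 < ζ) (h : ‖s ζ‖ ≤ A * ζ ^ (-γ)) :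
    ‖ζ ^ (d - 1) * s ζ‖ ≤ A * ζ ^ (d - 1 - γ) := by
  rw [norm_mul, Real.norm_of_nonneg (by positivity), sub_eq_add_neg (d - 1), Real.rpow_add hζ,
    mul_left_comm]
  gcongr

lemma intervalIntegrable_rpow_mul_of_norm_le {y : ℝ} (hγ : γ < d) (hy : 0 ≤ y)
    (hs : AEStronglyMeasurable s (volume.restrict (Ioc 0 y)))
    (hsA : ∀ᵐ ζ ∂volume.restrict (Ioc 0 y), ‖s ζ‖ ≤ A * ζ ^ (-γ)) :
    IntervalIntegrable (fun ζ => ζ ^ (d - 1) * s ζ) volume 0 y := by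
  have hpow : IntervalIntegrable (fun ζ : ℝ => A * ζ ^ (d - 1 - γ)) volume 0 y :=
    (intervalIntegral.intervalIntegrable_rpow' (by linarith)).const_mul A
  rw [intervalIntegrable_iff_integrableOn_Ioc_of_le hy] at hpow ⊢
  refine hpow.mono' ((measurable_id.pow_const _).aestronglyMeasurable.mul hs) ?_
  filter_upwards [hsA, ae_restrict_mem measurableSet_Ioc] with ζ hsζ hζ
  exact norm_rpow_mul_le hζ.1 hsζ

lemma norm_radialFlux_le {z : ℝ} (hγ : γ < d) (hz : 0 < z)
    (hsA : ∀ᵐ ζ ∂volume.restrict (Ioc 0 z), ‖s ζ‖ ≤ A * ζ ^ (-γ)) :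
    ‖radialFlux d s z‖ ≤ A / (d - γ) * z ^ (1 - γ) := by
  have hinner : ‖∫ ζ in (0 : ℝ)..z, ζ ^ (d - 1) * s ζ‖ ≤ A / (d - γ) * z ^ (d - γ) := calc
    _ ≤ ∫ ζ in (0 : ℝ)..z, A * ζ ^ (d - 1 - γ) := by
        refine intervalIntegral.norm_integral_le_of_norm_le hz.le ?_
          ((intervalIntegral.intervalIntegrable_rpow' (by linarith)).const_mul A)
        filter_upwards [(ae_restrict_iff' measurableSet_Ioc).1 hsA] with ζ hsζ hζ
        exact norm_rpow_mul_le hζ.1 (hsζ hζ)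
    _ = A / (d - γ) * z ^ (d - γ) := by
        have hexp : d - 1 - γ + 1 = d - γ := by ring
        rw [intervalIntegral.integral_const_mul, integral_rpow (Or.inl (by linarith)), hexp,
          Real.zero_rpow (sub_pos.2 hγ).ne']
        ring
  calc ‖radialFlux d s z‖
      = z ^ (-(d - 1)) * ‖∫ ζ in (0 : ℝ)..z, ζ ^ (d - 1) * s ζ‖ := by
        rw [radialFlux, norm_mul, Real.norm_of_nonneg (by positivity)]
    _ ≤ z ^ (-(d - 1)) * (A / (d - γ) * z ^ (d - γ)) := by gcongr
    _ = A / (d - γ) * z ^ (1 - γ) := by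
        rw [mul_left_comm, ← Real.rpow_add hz]; ring_nf

lemma intervalIntegrable_radialFlux_of_norm_le {y : ℝ} (hγd : γ < d) (hγ₂ : γ < 2) (hy : 0 ≤ y)
    (hs : AEStronglyMeasurable s (volume.restrict (Ioc 0 y)))
    (hsA : ∀ᵐ ζ ∂volume.restrict (Ioc 0 y), ‖s ζ‖ ≤ A * ζ ^ (-γ)) :
    IntervalIntegrable (radialFlux d s) volume 0 y := by
  have hpow : IntervalIntegrable (fun z : ℝ => A / (d - γ) * z ^ (1 - γ)) volume 0 y :=
    (intervalIntegral.intervalIntegrable_rpow' (by linarith)).const_mul _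
  have hcont : ContinuousOn (fun z => ∫ ζ in (0 : ℝ)..z, ζ ^ (d - 1) * s ζ) (uIcc 0 y) :=
    intervalIntegral.continuousOn_primitive_interval' (a := 0)
      (intervalIntegrable_rpow_mul_of_norm_le hγd hy hs hsA) left_mem_uIcc
  rw [intervalIntegrable_iff_integrableOn_Ioc_of_le hy] at hpow ⊢
  refine hpow.mono' ((measurable_id.pow_const _).aestronglyMeasurable.mul ?_) ?_
  · refine (hcont.mono ?_).aestronglyMeasurable measurableSet_Ioc
    exact Ioc_subset_Icc_self.trans Icc_subset_uIcc
  · filter_upwards [ae_restrict_mem measurableSet_Ioc] with z hz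
    exact norm_radialFlux_le hγd hz.1
      (ae_restrict_of_ae_restrict_of_subset (Ioc_subset_Ioc_right hz.2) hsA)

end RadialFlux

section RadialSolution

/-- `V` is a nonnegative solution, in integrated form, of the radial equation
`Δ V = ρ * V ^ (1 / m)` on `[0, ∞)` with `V 0 = α`, in dimension `d`. Integrability of both
integrands is part of the definition, since a divergent integral has the value `0` in Lean. -/
structure IsRadialSolution (d m α : ℝ) (ρ V : ℝ → ℝ) : Prop where
  nonneg : ∀ y, 0 ≤ y → 0 ≤ V y
  intervalIntegrable_source : ∀ y, 0 ≤ y →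
    IntervalIntegrable (fun ζ => ζ ^ (d - 1) * (ρ ζ * V ζ ^ (1 / m))) volume 0 y
  intervalIntegrable_flux : ∀ y, 0 ≤ y →
    IntervalIntegrable (radialFlux d fun ζ => ρ ζ * V ζ ^ (1 / m)) volume 0 y
  eq_add_integral : ∀ y, 0 ≤ y →
    V y = α + ∫ z in (0 : ℝ)..y, radialFlux d (fun ζ => ρ ζ * V ζ ^ (1 / m)) z

/-- The profile `y ^ 2 * (1 + y) ^ (-γ)`, the common form of `y ^ 2` near `0` and of
`y ^ (2 - γ)` near `∞`, up to constants. Its power `m / (m - 1)` is the lower barrier for radial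
solutions whose weight decays at most like `y ^ (-γ)`. -/
noncomputable def radialProfile (γ y : ℝ) : ℝ := y ^ 2 * (1 + y) ^ (-γ)

variable {d m α γ k K : ℝ} {ρ V : ℝ → ℝ}

lemma radialProfile_pos {y : ℝ} (hy : 0 < y) : 0 < radialProfile γ y := by
  unfold radialProfile; positivity

lemma continuousOn_radialProfile : ContinuousOn (radialProfile γ) (Ici 0) := by
  refine (by fun_prop : ContinuousOn (fun y : ℝ => y ^ 2) (Ici 0)).mul
    (ContinuousOn.rpow_const (by fun_prop) fun y hy => Or.inl ?_)
  linarith [mem_Ici.1 hy]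

lemma mul_radialProfile_le_radialProfile_half {y : ℝ} (hy : 0 < y) :
    2 ^ (-|γ|) / 4 * radialProfile γ y ≤ radialProfile γ (y / 2) := by
  have h := two_rpow_neg_abs_mul_rpow_le_rpow (a := 1 + y) (b := 1 + y / 2) (by linarith)
    (by linarith) (by linarith) (by linarith) (-γ)
  rw [abs_neg] at h
  calc 2 ^ (-|γ|) / 4 * radialProfile γ y
      = (y / 2) ^ 2 * (2 ^ (-|γ|) * (1 + y) ^ (-γ)) := by unfold radialProfile; ring
    _ ≤ (y / 2) ^ 2 * (1 + y / 2) ^ (-γ) := by gcongr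

lemma mul_ite_rpow_le_radialProfile {y : ℝ} (hy : 0 < y) :
    2 ^ (-|γ|) * (if y ≤ 1 then y ^ (2 : ℝ) else y ^ (2 - γ)) ≤ radialProfile γ y := by
  rw [radialProfile, ← abs_neg γ]
  split_ifs with hy₁
  · have h := two_rpow_neg_abs_mul_rpow_le_rpow (a := 1) (b := 1 + y) one_pos (by linarith)
      (by linarith) (by linarith) (-γ)
    rw [Real.one_rpow, mul_one] at h
    rw [Real.rpow_two, mul_comm]
    gcongr
  · have h := two_rpow_neg_abs_mul_rpow_le_rpow (a := y) (b := 1 + y) hy (by linarith)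
      (by linarith) (by linarith) (-γ)
    rw [sub_eq_add_neg, Real.rpow_add hy, Real.rpow_two, mul_left_comm]
    gcongr

lemma ae_nonneg_of_mul_rpow_le (hk : 0 ≤ k)
    (hρ : ∀ᵐ y ∂volume.restrict (Ioi (0 : ℝ)), k * (1 + y) ^ (-γ) ≤ ρ y) :
    ∀ᵐ y ∂volume.restrict (Ioi (0 : ℝ)), 0 ≤ ρ y := by
  filter_upwards [hρ, ae_restrict_mem measurableSet_Ioi] with y hρy hy
  have hy₁ : 0 < 1 + y := by linarith [mem_Ioi.1 hy]
  exact le_trans (by positivity) hρy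

lemma ae_norm_le_of_mul_rpow_le_of_le {φ : ℝ → ℝ} (hk : 0 ≤ k)
    (hρ : ∀ᵐ y ∂volume.restrict (Ioi (0 : ℝ)), k * (1 + y) ^ (-γ) ≤ ρ y ∧ ρ y ≤ φ y) :
    ∀ᵐ y ∂volume.restrict (Ioi (0 : ℝ)), ‖ρ y‖ ≤ φ y := by
  filter_upwards [ae_nonneg_of_mul_rpow_le hk (hρ.mono fun _ h => h.1), hρ] with y hρ₀ hρy
  exact (Real.norm_of_nonneg hρ₀).trans_le hρy.2

namespace IsRadialSolution

lemma of_continuousOn (hm : 0 ≤ m) (hγd : γ < d) (hγ₂ : γ < 2)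
    (hρ : AEStronglyMeasurable ρ (volume.restrict (Ioi 0)))
    (hρK : ∀ᵐ y ∂volume.restrict (Ioi (0 : ℝ)), ‖ρ y‖ ≤ K * y ^ (-γ))
    (hV : ContinuousOn V (Ici 0)) (hV₀ : ∀ y, 0 ≤ y → 0 ≤ V y)
    (hE : ∀ y, 0 ≤ y → V y = α + ∫ z in (0 : ℝ)..y, z ^ (-(d - 1)) *
      ∫ ζ in (0 : ℝ)..z, ζ ^ (d - 1) * ρ ζ * V ζ ^ (1 / m)) :
    IsRadialSolution d m α ρ V := by
  have hVm : ContinuousOn (fun ζ => V ζ ^ (1 / m)) (Ici 0) :=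
    hV.rpow_const fun _ _ => Or.inr (by positivity)
  have hmeas (y : ℝ) :
      AEStronglyMeasurable (fun ζ => ρ ζ * V ζ ^ (1 / m)) (volume.restrict (Ioc 0 y)) :=
    (hρ.mono_measure (Measure.restrict_mono_set _ Ioc_subset_Ioi_self)).mul
      ((hVm.mono fun _ hζ => hζ.1.le).aestronglyMeasurable measurableSet_Ioc)
  have hbound (y : ℝ) : ∃ A, ∀ᵐ ζ ∂volume.restrict (Ioc 0 y),
      ‖ρ ζ * V ζ ^ (1 / m)‖ ≤ A * ζ ^ (-γ) := by
    obtain ⟨M, hM⟩ := isCompact_Icc.exists_bound_of_continuousOn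
      (hVm.mono (Icc_subset_Ici_self : Icc 0 y ⊆ Ici 0))
    refine ⟨K * M, ?_⟩
    filter_upwards [ae_restrict_of_ae_restrict_of_subset Ioc_subset_Ioi_self hρK,
      ae_restrict_mem measurableSet_Ioc] with ζ hρζ hζ
    rw [norm_mul, mul_right_comm]
    exact mul_le_mul hρζ (hM ζ (Ioc_subset_Icc_self hζ)) (norm_nonneg _) ((norm_nonneg _).trans hρζ)
  refine ⟨hV₀, fun y hy => ?_, fun y hy => ?_, fun y hy => ?_⟩
  · obtain ⟨A, hA⟩ := hbound y
    exact intervalIntegrable_rpow_mul_of_norm_le hγd hy (hmeas y) hA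
  · obtain ⟨A, hA⟩ := hbound y
    exact intervalIntegrable_radialFlux_of_norm_le hγd hγ₂ hy (hmeas y) hA
  · simpa only [radialFlux, mul_assoc] using hE y hy

lemma source_nonneg (hV : IsRadialSolution d m α ρ V)
    (hρ : ∀ᵐ y ∂volume.restrict (Ioi (0 : ℝ)), 0 ≤ ρ y) :
    ∀ᵐ ζ ∂volume.restrict (Ioi (0 : ℝ)), 0 ≤ ρ ζ * V ζ ^ (1 / m) := by
  filter_upwards [hρ, ae_restrict_mem measurableSet_Ioi] with ζ hρζ hζ
  exact mul_nonneg hρζ (Real.rpow_nonneg (hV.nonneg ζ (le_of_lt hζ)) _)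

lemma monotoneOn (hV : IsRadialSolution d m α ρ V)
    (hρ : ∀ᵐ y ∂volume.restrict (Ioi (0 : ℝ)), 0 ≤ ρ y) : MonotoneOn V (Ici 0) := by
  intro a ha b hb hab
  rw [hV.eq_add_integral a ha, hV.eq_add_integral b hb]
  gcongr
  refine intervalIntegral.integral_mono_interval le_rfl ha hab ?_ (hV.intervalIntegrable_flux b hb)
  filter_upwards [ae_restrict_mem measurableSet_Ioc] with z hz
  exact radialFlux_nonneg (hV.source_nonneg hρ) hz.1.le

lemma apply_zero (hV : IsRadialSolution d m α ρ V) : V 0 = α := by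
  rw [hV.eq_add_integral 0 le_rfl, intervalIntegral.integral_same, add_zero]

lemma mul_radialProfile_mul_rpow_half_le (hV : IsRadialSolution d m α ρ V) (hm : 0 ≤ m)
    (hk : 0 ≤ k)
    (hρ : ∀ᵐ y ∂volume.restrict (Ioi (0 : ℝ)), k * (1 + y) ^ (-γ) ≤ ρ y) {y : ℝ} (hy : 0 < y) :
    k * 2 ^ (-|d - 1|) * 2 ^ (-|γ|) / 8 * radialProfile γ y * V (y / 2) ^ (1 / m) ≤ V y := by
  have hρ₀ := ae_nonneg_of_mul_rpow_le hk hρ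
  have hy₂ : 0 < y / 2 := half_pos hy
  have hV₂ : 0 ≤ V (y / 2) := hV.nonneg _ hy₂.le
  set D := k * (2 ^ (-|γ|) * (1 + y) ^ (-γ)) * V (y / 2) ^ (1 / m) with hD
  have hDs : ∀ᵐ ζ ∂volume.restrict (Icc (y / 2) (2 * (y / 2))), D ≤ ρ ζ * V ζ ^ (1 / m) := by
    filter_upwards [ae_restrict_of_ae_restrict_of_subset
      (fun _ hζ => hy₂.trans_le hζ.1 : Icc (y / 2) (2 * (y / 2)) ⊆ Ioi 0) hρ,
      ae_restrict_mem measurableSet_Icc] with ζ hρζ hζ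
    have hζ₀ : 0 < ζ := hy₂.trans_le hζ.1
    have hpow := two_rpow_neg_abs_mul_rpow_le_rpow (a := 1 + y) (b := 1 + ζ) (by linarith)
      (by linarith) (by linarith [hζ.1]) (by linarith [hζ.2]) (-γ)
    rw [abs_neg] at hpow
    have hVζ : V (y / 2) ≤ V ζ := hV.monotoneOn hρ₀ hy₂.le hζ₀.le hζ.1
    exact mul_le_mul ((mul_le_mul_of_nonneg_left hpow hk).trans hρζ)
      (Real.rpow_le_rpow hV₂ hVζ (by positivity)) (by positivity)
      (le_trans (by positivity) hρζ)
  have hgrow := mul_sq_le_integral_radialFlux hy₂ hV.intervalIntegrable_source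
    (hV.intervalIntegrable_flux _ (by linarith)) (hV.source_nonneg hρ₀) (by positivity) hDs
  rw [mul_div_cancel₀ y two_ne_zero] at hgrow
  calc k * 2 ^ (-|d - 1|) * 2 ^ (-|γ|) / 8 * radialProfile γ y * V (y / 2) ^ (1 / m)
      = 2 ^ (-|d - 1|) * D * ((y / 2) ^ 2 / 2) := by rw [hD, radialProfile]; ring
    _ ≤ V y := by
        rw [hV.eq_add_integral y hy.le]
        linarith [hV.apply_zero ▸ hV.nonneg 0 le_rfl]

lemma exists_pos_mul_radialProfile_rpow_le (d γ : ℝ) (hm : 1 < m) (hk : 0 < k) :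
    ∃ c : ℝ, 0 < c ∧ ∀ (α : ℝ) (ρ V : ℝ → ℝ), 0 < α → IsRadialSolution d m α ρ V →
      (∀ᵐ y ∂volume.restrict (Ioi (0 : ℝ)), k * (1 + y) ^ (-γ) ≤ ρ y) →
      ∀ y, 0 < y → c * radialProfile γ y ^ (m / (m - 1)) ≤ V y := by
  refine ⟨(k * 2 ^ (-|d - 1|) * 2 ^ (-|γ|) / 8 * (2 ^ (-|γ|) / 4) ^ (m / (m - 1) - 1)) ^
    (m / (m - 1)), by positivity, fun α ρ V hα hV hρ y hy => ?_⟩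
  exact rpow_mul_rpow_le_of_mul_rpow_half_le hm hα (by positivity) (by positivity)
    continuousOn_radialProfile (fun _ => radialProfile_pos)
    (fun _ => mul_radialProfile_le_radialProfile_half)
    (fun x hx => hV.apply_zero ▸
      hV.monotoneOn (ae_nonneg_of_mul_rpow_le hk.le hρ) self_mem_Ici hx.le hx.le)
    (fun x hx => hV.mul_radialProfile_mul_rpow_half_le (by linarith) hk.le hρ hx) hy

end IsRadialSolution

end RadialSolution

theorem radial_ode_lower_bound_general (d m γ k : ℝ) (hm : 1 < m) (hk : 0 < k) :
    ∃ c : ℝ, 0 < c ∧ ∀ (α : ℝ) (ρ V : ℝ → ℝ), 0 < α → IsRadialSolution d m α ρ V →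
      (∀ᵐ y ∂volume.restrict (Ioi (0 : ℝ)), k * (1 + y) ^ (-γ) ≤ ρ y) →
      (∀ y : ℝ, 0 ≤ y →
        c * (if y ≤ 1 then y ^ (2 : ℝ) else y ^ (2 - γ)) ^ (m / (m - 1)) ≤ V y) ∧
      (∀ᶠ y in atTop, c ≤ V y / y ^ ((2 - γ) * m / (m - 1))) := by
  have hp : 0 < m / (m - 1) := div_pos (by linarith) (by linarith)
  obtain ⟨c, hc, hbound⟩ := IsRadialSolution.exists_pos_mul_radialProfile_rpow_le d γ hm hk
  refine ⟨c * (2 ^ (-|γ|)) ^ (m / (m - 1)), by positivity, fun α ρ V hα hV hρ => ?_⟩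
  have hlower : ∀ y : ℝ, 0 ≤ y → c * (2 ^ (-|γ|)) ^ (m / (m - 1)) *
      (if y ≤ 1 then y ^ (2 : ℝ) else y ^ (2 - γ)) ^ (m / (m - 1)) ≤ V y := by
    intro y hy
    rcases hy.eq_or_lt with rfl | hy₀
    · simpa [Real.zero_rpow hp.ne'] using hV.nonneg 0 le_rfl
    · have hF : 0 ≤ if y ≤ 1 then y ^ (2 : ℝ) else y ^ (2 - γ) := by split_ifs <;> positivity
      refine le_trans ?_ (hbound α ρ V hα hV hρ y hy₀)
      rw [mul_assoc, ← Real.mul_rpow (by positivity) hF]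
      gcongr
      exact mul_ite_rpow_le_radialProfile hy₀
  refine ⟨hlower, ?_⟩
  filter_upwards [eventually_gt_atTop 1] with y hy
  have hy₀ : 0 < y := one_pos.trans hy
  have h := hlower y hy₀.le
  rwa [if_neg hy.not_ge, ← Real.rpow_mul hy₀.le, ← mul_div_assoc,
    ← le_div_iff₀ (by positivity)] at h

open MeasureTheory Metric Filter Set ENNReal in
/-- **Lower asymptotic bound for the radial elliptic ODE** (Step 2 of the proof of
Proposition 2.7 of Muratori–Petitt): there is `c > 0` depending only on `N, m, γ, k`
(in particular independent of `K`, `β` and `ρ`) such that every solution of the radial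
integral equation satisfies `V(y) ≥ c F(y)^{m/(m-1)}`, where `F(y) = y²` on `[0,1]` and
`F(y) = y^{2-γ}` for `y > 1`; in particular `liminf_{y→∞} V(y)/y^{(2-γ)m/(m-1)} ≥ c`. -/
theorem radial_ode_lower_bound
    (N : ℕ) (hN : 3 ≤ N) (m γ k : ℝ)
    (hm : 1 < m) (hγ0 : 0 ≤ γ) (hγ2 : γ < 2) (hk : 0 < k) :
    ∃ c : ℝ, 0 < c ∧
      ∀ K : ℝ, k ≤ K →
      ∀ ρ : ℝ → ℝ, Measurable ρ →
        (∀ᵐ y ∂(volume.restrict (Ioi (0 : ℝ))),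
          k * (1 + y) ^ (-γ) ≤ ρ y ∧ ρ y ≤ K * y ^ (-γ)) →
      ∀ β : ℝ, 0 < β →
      ∀ V : ℝ → ℝ, ContinuousOn V (Ici 0) → (∀ y : ℝ, 0 ≤ y → 0 ≤ V y) →
        (∀ y : ℝ, 0 ≤ y → V y = β ^ m +
          ∫ z in (0 : ℝ)..y, z ^ (-((N : ℝ) - 1)) *
            ∫ ζ in (0 : ℝ)..z, ζ ^ ((N : ℝ) - 1) * ρ ζ * V ζ ^ (1 / m)) →
        (∀ y : ℝ, 0 ≤ y →
          c * (if y ≤ 1 then y ^ (2 : ℝ) else y ^ (2 - γ)) ^ (m / (m - 1)) ≤ V y) ∧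
        (∀ᶠ y in atTop, c ≤ V y / y ^ ((2 - γ) * m / (m - 1))) := by
  obtain ⟨c, hc, hbound⟩ := radial_ode_lower_bound_general N m γ k hm hk
  exact ⟨c, hc, fun K _ ρ hρ hρb β hβ V hV hV₀ hE => hbound _ ρ V (Real.rpow_pos_of_pos hβ m)
    (.of_continuousOn (by linarith) (hγ2.trans_le (by exact_mod_cast (by lia : 2 ≤ N))) hγ2
      hρ.aestronglyMeasurable (ae_norm_le_of_mul_rpow_le_of_le hk.le hρb) hV hV₀ hE)
    (hρb.mono fun _ h => h.1)⟩
end
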